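/- Fix an integer k ≥ 2. For every ε > 0 there exists N such that for all n ≥ N the following holds: if G is a finite simple graph on n vertices with no isolated vertices whose edge polytope P(G) is k-neighborly, then P(G) has at most (1/2)·n^{1+1/k} + ((k−1)/(2k) + ε)·n vertices (equivalently, G has at most that many edges). -/

import Mathlib

open Set

/-- The edge polytope of a graph `G` on the vertex set `Fin n`. -/
def edgePolytope {n : ℕ} (G : SimpleGraph (Fin n)) : Set (Fin n → ℝ) :=
  convexHull ℝ {x | ∃ i j : Fin n, G.Adj i j ∧ x = Pi.single i 1 + Pi.single j 1}

/-- A polytope `P` is `k`-neighborly if every set of at most `k` of its vertices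
(extreme points) is the vertex set of a face of `P`, a face being the intersection of
`P` with a supporting hyperplane (`IsExposed`), together with `∅` and `P` itself. -/
def KNeighborly {n : ℕ} (P : Set (Fin n → ℝ)) (k : ℕ) : Prop :=
  ∀ S : Set (Fin n → ℝ), S ⊆ Set.extremePoints ℝ P → S.Finite → S.ncard ≤ k →
    ∃ F : Set (Fin n → ℝ), IsExposed ℝ P F ∧ F ∩ Set.extremePoints ℝ P = S

/-! A supporting hyperplane of the edge polytope amounts to vertex weights whose sums over the ends
of edges are nonnegative. Such sums telescope when alternated along a path, so two paths of equal
length at most `k` with common ends have equal alternating sums; a hyperplane containing the edges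
of odd index in one of them and those of even index in the other contains both paths. In a
`k`-neighborly polytope this forces the two paths to coincide.

Thus a graph on `n` vertices has at most `n ^ 2` paths of length `k`, and all but `O(n D ^ (k - 2))`
of its non-backtracking walks of length `k` are paths, where `D` bounds the degrees: a walk which is
not a path contains a cycle, and the unique-path property leaves at most `D` cycles of each short
length through a vertex. By Alon, Hoory and Linial a graph of average degree `d` has at least
`n d (d - 1) ^ (k - 1)` such walks. Passing to a subgraph of minimum degree at least `d / 2` keeps
`D = O(d)`, and comparing the two counts gives `d ≤ n ^ (1 / k) + (k - 1) / k + o(1)`.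
-/

section EdgeWeight

variable {V M : Type*}

/-- The weight `y u + y v` that vertex weights `y` give to the edge `s(u, v)`. Linear functionals
take these values at the vertices of the edge polytope. -/
def edgeWeight [AddCommMagma M] (y : V → M) : Sym2 V → M :=
  Sym2.lift ⟨fun u v ↦ y u + y v, fun _ _ ↦ add_comm _ _⟩

@[simp]
lemma edgeWeight_mk [AddCommMagma M] (y : V → M) (u v : V) : edgeWeight y s(u, v) = y u + y v := rfl

variable [DecidableEq V]

/-- The vertex `e_u + e_v` of the edge polytope that corresponds to the edge `s(u, v)`. -/
def edgeVector : Sym2 V → V → ℝ :=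
  edgeWeight fun v ↦ Pi.single v 1

lemma edgeVector_mk (u v : V) : edgeVector s(u, v) = Pi.single u 1 + Pi.single v 1 := rfl

lemma edgeVector_ne_zero_iff {e : Sym2 V} {w : V} : edgeVector e w ≠ 0 ↔ w ∈ e := by
  induction e with | h u v =>
  simp only [edgeVector_mk, Pi.add_apply, Pi.single_apply, Sym2.mem_iff]
  split_ifs <;> simp_all

lemma edgeVector_injective : Function.Injective (edgeVector (V := V)) := fun e f h ↦
  Sym2.ext fun w ↦ by rw [← edgeVector_ne_zero_iff, h, edgeVector_ne_zero_iff]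

lemma edgeVector_apply_mem {e : Sym2 V} (he : ¬ e.IsDiag) (w : V) :
    edgeVector e w ∈ ({0, 1} : Set ℝ) := by
  induction e with | h u v =>
  rw [Sym2.mk_isDiag_iff] at he
  simp only [edgeVector_mk, Pi.add_apply, Pi.single_apply]
  split_ifs <;> simp_all

lemma extremePoints_Icc_zero_one {ι : Type*} :
    extremePoints ℝ (Icc (0 : ι → ℝ) 1) = univ.pi fun _ ↦ {0, 1} := by
  rw [← pi_univ_Icc, extremePoints_pi]
  simp

lemma edgeVector_mem_extremePoints_Icc {e : Sym2 V} (he : ¬ e.IsDiag) :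
    edgeVector e ∈ extremePoints ℝ (Icc 0 1) := by
  rw [extremePoints_Icc_zero_one]
  exact fun w _ ↦ edgeVector_apply_mem he w

end EdgeWeight

section EdgePolytope

variable {n k : ℕ} {G : SimpleGraph (Fin n)} {e : Sym2 (Fin n)}

lemma edgePolytope_eq_convexHull_image :
    edgePolytope G = convexHull ℝ (edgeVector '' G.edgeSet) := by
  refine congrArg _ (Set.ext fun x ↦ ⟨?_, ?_⟩)
  · rintro ⟨i, j, h, rfl⟩
    exact ⟨s(i, j), h, rfl⟩
  · rintro ⟨e, he, rfl⟩
    induction e with | h i j => exact ⟨i, j, he, rfl⟩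

lemma edgeVector_mem_edgePolytope (he : e ∈ G.edgeSet) : edgeVector e ∈ edgePolytope G :=
  edgePolytope_eq_convexHull_image (G := G) ▸ subset_convexHull ℝ _ (mem_image_of_mem _ he)

lemma edgePolytope_subset_Icc : edgePolytope G ⊆ Icc 0 1 := by
  rw [edgePolytope_eq_convexHull_image]
  refine convexHull_min (image_subset_iff.2 fun e he ↦ ?_) (convex_Icc 0 1)
  exact (edgeVector_mem_extremePoints_Icc (G.not_isDiag_of_mem_edgeSet he)).1

lemma edgeVector_mem_extremePoints (he : e ∈ G.edgeSet) :
    edgeVector e ∈ extremePoints ℝ (edgePolytope G) :=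
  inter_extremePoints_subset_extremePoints_of_subset edgePolytope_subset_Icc
    ⟨edgeVector_mem_edgePolytope he,
      edgeVector_mem_extremePoints_Icc (G.not_isDiag_of_mem_edgeSet he)⟩

/-- Because all points `e_u + e_v` have coordinate sum `2`, the constant of a supporting
hyperplane can be spread evenly over the two ends of each edge. -/
lemma KNeighborly.exists_edgeWeight (hG : KNeighborly (edgePolytope G) k)
    {S : Finset (Sym2 (Fin n))} (hS : ↑S ⊆ G.edgeSet) (hk : S.card ≤ k) :
    ∃ y : Fin n → ℝ, ∀ e ∈ G.edgeSet, 0 ≤ edgeWeight y e ∧ (edgeWeight y e = 0 ↔ e ∈ S) := by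
  obtain rfl | ⟨e₀, he₀⟩ := S.eq_empty_or_nonempty
  · exact ⟨1, fun e _ ↦ by induction e with | h u v => norm_num⟩
  obtain ⟨F, hF, hFS⟩ := hG (edgeVector '' S)
    (image_subset_iff.2 fun e he ↦ edgeVector_mem_extremePoints (hS he))
    (S.finite_toSet.image _) ((ncard_image_le S.finite_toSet).trans (by simpa using hk))
  have mem_F_iff {e : Sym2 (Fin n)} (he : e ∈ G.edgeSet) : edgeVector e ∈ F ↔ e ∈ S := by
    rw [← Finset.mem_coe, ← edgeVector_injective.mem_set_image, ← hFS]
    exact (and_iff_left (edgeVector_mem_extremePoints he)).symm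
  have he₀F : edgeVector e₀ ∈ F := (mem_F_iff (hS he₀)).2 he₀
  obtain ⟨φ, rfl⟩ := hF ⟨_, he₀F⟩
  set M := φ (edgeVector e₀)
  refine ⟨fun v ↦ M / 2 - φ (Pi.single v 1), fun e he ↦ ?_⟩
  have weight_eq : edgeWeight (fun v ↦ M / 2 - φ (Pi.single v 1)) e = M - φ (edgeVector e) := by
    induction e with | h u v =>
    rw [edgeWeight_mk, edgeVector_mk, map_add]
    ring
  have heP := edgeVector_mem_edgePolytope he
  rw [weight_eq, sub_eq_zero, ← mem_F_iff he]
  refine ⟨sub_nonneg.2 (he₀F.2 _ heP), fun h ↦ ⟨heP, fun x hx ↦ h ▸ he₀F.2 x hx⟩, fun h ↦ ?_⟩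
  exact (h.2 _ he₀F.1).antisymm (he₀F.2 _ heP)

end EdgePolytope

section AlternateEntries

variable {α : Type*}

/-- The entries of a list at the positions `0, 2, 4, …`; those of the tail are the entries at the
positions `1, 3, 5, …`. Alternating sums along a walk are differences of sums over the two. -/
def alternateEntries : List α → List α
  | [] => []
  | [a] => [a]
  | a :: _ :: l => a :: alternateEntries l

@[simp]
lemma alternateEntries_nil : alternateEntries ([] : List α) = [] := rfl

@[simp]
lemma alternateEntries_cons (a : α) (l : List α) :
    alternateEntries (a :: l) = a :: alternateEntries l.tail := by
  cases l <;> rfl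

lemma alternateEntries_subset : ∀ l : List α, alternateEntries l ⊆ l
  | [] => List.Subset.refl _
  | [_] => List.Subset.refl _
  | _ :: _ :: l => List.cons_subset_cons _ <|
      List.Subset.trans (alternateEntries_subset l) (List.subset_cons_self _ _)

lemma length_alternateEntries : ∀ l : List α, (alternateEntries l).length = (l.length + 1) / 2
  | [] => by simp
  | [_] => by simp
  | _ :: _ :: l => by
    simp only [alternateEntries, List.length_cons, length_alternateEntries l]
    omega

lemma length_alternateEntries_tail_add (l l' : List α) (h : l.length = l'.length) :
    (alternateEntries l.tail).length + (alternateEntries l').length = l.length := by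
  rw [length_alternateEntries, length_alternateEntries, List.length_tail]
  omega

end AlternateEntries

section PathsUnique

open SimpleGraph

variable {V : Type*} {G : SimpleGraph V}

lemma sum_alternateEntries_sub_sum_alternateEntries_tail {R : Type*} [CommRing R] (y : V → R)
    {u v : V} (p : G.Walk u v) :
    ((alternateEntries p.edges).map (edgeWeight y)).sum -
      ((alternateEntries p.edges.tail).map (edgeWeight y)).sum =
      y u - (-1) ^ p.length * y v := by
  induction p with
  | nil => simp
  | cons h p ih =>
    simp only [Walk.edges_cons, alternateEntries_cons, List.tail_cons, List.map_cons, List.sum_cons,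
      edgeWeight_mk, Walk.length_cons, pow_succ]
    linear_combination -ih

/-- A supporting hyperplane through the edges of odd position in `p` and of even position in `q`
contains all edges of `p` and `q`, since the alternating sums along `p` and `q` agree. -/
lemma KNeighborly.mem_alternateEntries {n k : ℕ} {G : SimpleGraph (Fin n)}
    (hG : KNeighborly (edgePolytope G) k) {u v : Fin n} (p q : G.Walk u v)
    (hpq : p.length = q.length) (hk : p.length ≤ k) {e : Sym2 (Fin n)}
    (he : e ∈ alternateEntries p.edges) :
    e ∈ alternateEntries p.edges.tail ∨ e ∈ alternateEntries q.edges := by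
  have even_mem_edgeSet (r : G.Walk u v) : ∀ e ∈ alternateEntries r.edges, e ∈ G.edgeSet :=
    fun e he ↦ r.edges_subset_edgeSet (alternateEntries_subset _ he)
  have odd_mem_edgeSet (r : G.Walk u v) : ∀ e ∈ alternateEntries r.edges.tail, e ∈ G.edgeSet :=
    fun e he ↦ r.edges_subset_edgeSet (List.mem_of_mem_tail (alternateEntries_subset _ he))
  obtain ⟨y, hy⟩ := hG.exists_edgeWeight
    (S := (alternateEntries p.edges.tail ++ alternateEntries q.edges).toFinset)
    (fun e he ↦ by
      rw [Finset.mem_coe, List.mem_toFinset, List.mem_append] at he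
      exact he.elim (odd_mem_edgeSet p e) (even_mem_edgeSet q e))
    ((List.toFinset_card_le _).trans (by
      rw [List.length_append, length_alternateEntries_tail_add _ _ (by simpa using hpq)]
      simpa using hk))
  simp only [List.mem_toFinset, List.mem_append] at hy
  have sum_odd_p : ((alternateEntries p.edges.tail).map (edgeWeight y)).sum = 0 :=
    List.sum_eq_zero <| List.forall_mem_map.2 fun e he ↦
      (hy e (odd_mem_edgeSet p e he)).2.2 (.inl he)
  have sum_even_q : ((alternateEntries q.edges).map (edgeWeight y)).sum = 0 :=
    List.sum_eq_zero <| List.forall_mem_map.2 fun e he ↦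
      (hy e (even_mem_edgeSet q e he)).2.2 (.inr he)
  have sum_odd_q : 0 ≤ ((alternateEntries q.edges.tail).map (edgeWeight y)).sum :=
    List.sum_nonneg <| List.forall_mem_map.2 fun e he ↦ (hy e (odd_mem_edgeSet q e he)).1
  have le_sum_even_p : edgeWeight y e ≤ ((alternateEntries p.edges).map (edgeWeight y)).sum :=
    List.single_le_sum (List.forall_mem_map.2 fun e he ↦ (hy e (even_mem_edgeSet p e he)).1) _
      (List.mem_map_of_mem he)
  have telescope_p := sum_alternateEntries_sub_sum_alternateEntries_tail y p
  have telescope_q := sum_alternateEntries_sub_sum_alternateEntries_tail y q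
  rw [hpq] at telescope_p
  obtain ⟨hnonneg, hzero⟩ := hy e (even_mem_edgeSet p e he)
  exact hzero.1 (by linarith)

/-- A graph in which any two vertices are joined by at most one path of each length up to `k`. This
is the combinatorial content extracted from `k`-neighborliness. -/
def PathsUnique (G : SimpleGraph V) (k : ℕ) : Prop :=
  ∀ ⦃u v : V⦄ (p q : G.Walk u v), p.IsPath → q.IsPath → p.length = q.length → p.length ≤ k → p = q

lemma KNeighborly.pathsUnique {n k : ℕ} {G : SimpleGraph (Fin n)}
    (hG : KNeighborly (edgePolytope G) k) : PathsUnique G k := by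
  intro u v p
  induction p with
  | nil => exact fun q _ hq _ _ ↦ (Walk.isPath_iff_nil.1 hq).eq_nil.symm
  | @cons u x v h p ih =>
    rintro (_ | ⟨h', q⟩) hp hq hpq hk
    · simp at hpq
    have first_edge_mem := hG.mem_alternateEntries _ _ hpq hk (e := s(u, x)) (by simp)
    rw [Walk.cons_isPath_iff] at hp hq
    simp only [Walk.edges_cons, List.tail_cons, alternateEntries_cons, List.mem_cons]
      at first_edge_mem
    obtain hmem | heq | hmem := first_edge_mem
    · exact absurd (p.fst_mem_support_of_mem_edges (alternateEntries_subset _ hmem)) hp.2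
    · obtain rfl := Sym2.congr_right.1 heq
      rw [ih q hp.1 hq.1 (by simpa using hpq) ((Nat.le_succ _).trans hk)]
    · exact absurd (q.fst_mem_support_of_mem_edges
        (List.mem_of_mem_tail (alternateEntries_subset _ hmem))) hq.2

lemma PathsUnique.of_isContained {W : Type*} {H : SimpleGraph W} {k : ℕ} (hG : PathsUnique G k)
    (hHG : H ⊑ G) : PathsUnique H k := by
  obtain ⟨f⟩ := hHG
  intro u v p q hp hq hpq hk
  apply Walk.map_injective_of_injective f.injective
  exact hG _ _ (hp.map f.injective)
    (hq.map f.injective) (by simpa using hpq) (by simpa using hk)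

end PathsUnique

section NonBacktracking

open SimpleGraph

variable {V : Type*} {G : SimpleGraph V}

/-- A walk is non-backtracking if no two consecutive edges of it agree. These walks are easier to
count from below than paths. -/
def IsNonBacktracking {u v : V} (p : G.Walk u v) : Prop :=
  p.edges.IsChain (· ≠ ·)

instance [DecidableEq V] {u v : V} : DecidablePred (IsNonBacktracking (G := G) (u := u) (v := v)) :=
  fun p ↦ inferInstanceAs (Decidable (p.edges.IsChain (· ≠ ·)))

instance [DecidableEq V] {u : V} : DecidablePred (Walk.IsCycle (G := G) (u := u)) := fun p ↦
  decidable_of_iff (p.edges.Nodup ∧ ¬ p.Nil ∧ p.support.tail.Nodup) <| by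
    rw [Walk.isCycle_def, Walk.isTrail_def, ne_eq, Walk.eq_nil_iff_nil]

/-- The shortest suffix of the walk that is not a path begins with a cycle. -/
lemma IsNonBacktracking.exists_isCycle {u v : V} {p : G.Walk u v} (hp : IsNonBacktracking p)
    (hpath : ¬ p.IsPath) :
    ∃ (x : V) (a : G.Walk u x) (c : G.Walk x x) (b : G.Walk x v),
      c.IsCycle ∧ p = a.append (c.append b) := by
  classical
  induction p with
  | nil => simp at hpath
  | @cons u x v h q ih =>
    obtain ⟨hne, hq⟩ := List.isChain_cons.1 hp
    by_cases hqpath : q.IsPath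
    · have hu : u ∈ q.support := by simpa [Walk.cons_isPath_iff, hqpath] using hpath
      refine ⟨u, .nil, .cons h (q.takeUntil u hu), q.dropUntil u hu, ?_, by simp⟩
      refine (Walk.cons_isCycle_iff _ h).2 ⟨hqpath.takeUntil hu, fun hmem ↦ ?_⟩
      cases q with
      | nil => exact h.ne (by simpa using hu)
      | cons h' r =>
        refine hne s(u, x) ?_ rfl
        have := (hqpath.takeUntil hu).eq_snd_of_mem_edges (Sym2.eq_swap ▸ hmem)
        rw [Walk.snd_takeUntil h.ne] at this
        simp_all [Sym2.eq_swap]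
    · obtain ⟨y, a, c, b, hc, rfl⟩ := ih hq hqpath
      exact ⟨y, .cons h a, c, b, hc, rfl⟩

lemma PathsUnique.isCycle_ext {k : ℕ} (hG : PathsUnique G k) {x : V} {c d : G.Walk x x}
    (hc : c.IsCycle) (hd : d.IsCycle) (hcd : c.length = d.length) (hk : c.length ≤ k + 1)
    (hsnd : c.snd = d.snd) : c = d := by
  cases c with
  | nil => exact absurd rfl hc.ne_nil
  | cons h p =>
    cases d with
    | nil => exact absurd rfl hd.ne_nil
    | cons h' q =>
      obtain rfl : _ = _ := by simpa using hsnd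
      rw [hG p q (by simpa using hc.isPath_tail) (by simpa using hd.isPath_tail)
        (by simpa using hcd) (by simpa using hk)]

end NonBacktracking

section WalkCounting

open SimpleGraph
open scoped Finset

variable {V : Type*} [Fintype V] [DecidableEq V] {G : SimpleGraph V} [DecidableRel G.Adj]

lemma sum_card_filter_finsetWalkLength_succ (n : ℕ) {u : V} {P : ∀ v, G.Walk u v → Prop}
    {Q : ∀ x v, G.Walk x v → Prop} [∀ v, DecidablePred (P v)] [∀ x v, DecidablePred (Q x v)]
    (hPQ : ∀ x v (h : G.Adj u x) (p : G.Walk x v), P v (.cons h p) ↔ Q x v p) :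
    ∑ v, #{p ∈ G.finsetWalkLength (n + 1) u v | P v p} =
      ∑ x ∈ G.neighborFinset u, ∑ v, #{p ∈ G.finsetWalkLength n x v | Q x v p} := by
  rw [Finset.sum_comm]
  refine Finset.sum_congr rfl fun v _ ↦ ?_
  rw [finsetWalkLength, Finset.filter_biUnion, Finset.card_biUnion]
  · rw [Finset.sum_subtype (p := (· ∈ G.neighborSet u)) (G.neighborFinset u) (by simp)]
    refine Finset.sum_congr rfl fun x _ ↦ ?_
    rw [Finset.filter_map, Finset.card_map]
    exact congrArg _ (Finset.filter_congr fun p _ ↦ hPQ x v x.2 p)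
  · intro x _ y _ hxy
    simp only [Function.onFun, Finset.disjoint_left, Finset.mem_filter, Finset.mem_map]
    rintro _ ⟨⟨p, -, rfl⟩, -⟩ ⟨⟨q, -, hq⟩, -⟩
    exact hxy (Subtype.ext (Walk.cons.inj hq).1.symm)

lemma sum_card_finsetWalkLength_succ (n : ℕ) (u : V) :
    ∑ v, #(G.finsetWalkLength (n + 1) u v) =
      ∑ x ∈ G.neighborFinset u, ∑ v, #(G.finsetWalkLength n x v) := by
  simpa using sum_card_filter_finsetWalkLength_succ (G := G) n (u := u) (P := fun _ _ ↦ True)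
    (Q := fun _ _ _ ↦ True) (by simp)

lemma card_finsetWalkLength_comm (n : ℕ) (u v : V) :
    #(G.finsetWalkLength n u v) = #(G.finsetWalkLength n v u) :=
  Finset.card_nbij' Walk.reverse Walk.reverse
    (fun p hp ↦ by simpa [mem_finsetWalkLength_iff] using hp)
    (fun p hp ↦ by simpa [mem_finsetWalkLength_iff] using hp)
    (fun p _ ↦ p.reverse_reverse) (fun p _ ↦ p.reverse_reverse)

lemma sum_card_finsetWalkLength_le {D : ℕ} (hD : ∀ v, G.degree v ≤ D) (n : ℕ) (u : V) :
    ∑ v, #(G.finsetWalkLength n u v) ≤ D ^ n := by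
  induction n generalizing u with
  | zero => simp [finsetWalkLength, apply_dite]
  | succ n ih =>
    rw [sum_card_finsetWalkLength_succ, pow_succ']
    calc ∑ x ∈ G.neighborFinset u, ∑ v, #(G.finsetWalkLength n x v)
      _ ≤ ∑ _x ∈ G.neighborFinset u, D ^ n := Finset.sum_le_sum fun x _ ↦ ih x
      _ = G.degree u * D ^ n := by rw [Finset.sum_const, card_neighborFinset_eq_degree, smul_eq_mul]
      _ ≤ D * D ^ n := Nat.mul_le_mul_right _ (hD u)

section PathsUnique

variable {k : ℕ}

lemma PathsUnique.card_isPath_le_one (hG : PathsUnique G k) {n : ℕ} (hn : n ≤ k) (u v : V) :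
    #{p ∈ G.finsetWalkLength n u v | p.IsPath} ≤ 1 := by
  simp only [Finset.card_le_one, Finset.mem_filter, mem_finsetWalkLength_iff]
  rintro p ⟨rfl, hp⟩ q ⟨hpq, hq⟩
  exact hG p q hp hq hpq.symm hn

lemma PathsUnique.card_isCycle_le_degree (hG : PathsUnique G k) {n : ℕ} (hn : n ≤ k + 1) (x : V) :
    #{c ∈ G.finsetWalkLength n x x | c.IsCycle} ≤ G.degree x := by
  rw [← card_neighborFinset_eq_degree]
  refine Finset.card_le_card_of_injOn Walk.snd (fun c hc ↦ ?_) fun c hc d hd h ↦ ?_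
  · obtain ⟨-, hc⟩ := Finset.mem_filter.1 hc
    simpa using c.adj_snd hc.not_nil
  · simp only [Finset.coe_filter, mem_finsetWalkLength_iff, mem_ofPred_eq] at hc hd
    exact hG.isCycle_ext hc.2 hd.2 (hc.1.trans hd.1.symm) (hc.1.trans_le hn) h

lemma PathsUnique.card_isCycle_mul_pow_le (hG : PathsUnique G k) {D : ℕ}
    (hD : ∀ v, G.degree v ≤ D) (i j : ℕ) (x : V) :
    #{c ∈ G.finsetWalkLength (k - i - j) x x | c.IsCycle} * D ^ (i + j) ≤ D ^ (k - 2) := by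
  obtain h | ⟨c, hc⟩ := Finset.eq_empty_or_nonempty
    {c ∈ G.finsetWalkLength (k - i - j) x x | c.IsCycle}
  · simp [h]
  obtain ⟨hlen, hc⟩ := Finset.mem_filter.1 hc
  have hlen := (mem_finsetWalkLength_iff.1 hlen) ▸ hc.three_le_length
  have hD0 : 0 < D := ((G.degree_pos_iff_exists_adj x).2 ⟨_, c.adj_snd hc.not_nil⟩).trans_le (hD x)
  calc _ ≤ D * D ^ (i + j) :=
        Nat.mul_le_mul_right _ ((hG.card_isCycle_le_degree (by omega) x).trans (hD x))
    _ = D ^ (i + j + 1) := (pow_succ' ..).symm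
    _ ≤ D ^ (k - 2) := Nat.pow_le_pow_right hD0 (by omega)

end PathsUnique

lemma card_isNonBacktracking_not_isPath_le (k : ℕ) (u v : V) :
    #{p ∈ G.finsetWalkLength k u v | IsNonBacktracking p ∧ ¬ p.IsPath} ≤
      ∑ ij ∈ Finset.range k ×ˢ Finset.range k, ∑ x, #(G.finsetWalkLength ij.1 u x) *
        (#{c ∈ G.finsetWalkLength (k - ij.1 - ij.2) x x | c.IsCycle} *
          #(G.finsetWalkLength ij.2 x v)) := by
  let cycles (n : ℕ) (x : V) := {c ∈ G.finsetWalkLength n x x | c.IsCycle}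
  have hsub : {p ∈ G.finsetWalkLength k u v | IsNonBacktracking p ∧ ¬ p.IsPath} ⊆
      (Finset.range k ×ˢ Finset.range k).biUnion fun ij ↦ Finset.univ.biUnion fun x ↦
        (G.finsetWalkLength ij.1 u x ×ˢ cycles (k - ij.1 - ij.2) x ×ˢ
          G.finsetWalkLength ij.2 x v).image fun acb ↦ acb.1.append (acb.2.1.append acb.2.2) := by
    intro p hp
    simp only [Finset.mem_filter, mem_finsetWalkLength_iff] at hp
    obtain ⟨rfl, hnb, hpath⟩ := hp
    obtain ⟨x, a, c, b, hc, rfl⟩ := hnb.exists_isCycle hpath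
    have := hc.three_le_length
    simp only [cycles, Finset.mem_biUnion, Finset.mem_product, Finset.mem_range, Finset.mem_univ,
      true_and, Finset.mem_image, Finset.mem_filter, mem_finsetWalkLength_iff, Walk.length_append]
    exact ⟨(a.length, b.length), by constructor <;> dsimp only <;> omega, x, (a, c, b),
      ⟨rfl, ⟨by dsimp only; omega, hc⟩, rfl⟩, rfl⟩
  refine (Finset.card_le_card hsub).trans <| Finset.card_biUnion_le.trans <|
    Finset.sum_le_sum fun ij _ ↦ ?_
  refine Finset.card_biUnion_le.trans <| Finset.sum_le_sum fun x _ ↦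
    Finset.card_image_le.trans_eq ?_
  rw [Finset.card_product, Finset.card_product]

lemma PathsUnique.sum_card_isNonBacktracking_not_isPath_le {k : ℕ} (hG : PathsUnique G k) {D : ℕ}
    (hD : ∀ v, G.degree v ≤ D) :
    ∑ u, ∑ v, #{p ∈ G.finsetWalkLength k u v | IsNonBacktracking p ∧ ¬ p.IsPath} ≤
      k ^ 2 * (Fintype.card V * D ^ (k - 2)) := by
  have key (i j : ℕ) (x : V) : ∑ u, ∑ v, #(G.finsetWalkLength i u x) *
      (#{c ∈ G.finsetWalkLength (k - i - j) x x | c.IsCycle} * #(G.finsetWalkLength j x v)) ≤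
      D ^ (k - 2) := by
    simp only [← Finset.mul_sum, ← Finset.sum_mul, card_finsetWalkLength_comm i _ x]
    calc _ ≤ D ^ i * (#{c ∈ G.finsetWalkLength (k - i - j) x x | c.IsCycle} * D ^ j) := by
          gcongr
          · exact sum_card_finsetWalkLength_le hD i x
          · exact sum_card_finsetWalkLength_le hD j x
      _ = _ := by rw [pow_add]; ring
      _ ≤ D ^ (k - 2) := hG.card_isCycle_mul_pow_le hD i j x
  calc _ ≤ ∑ u, ∑ v, ∑ ij ∈ Finset.range k ×ˢ Finset.range k, ∑ x, _ :=
        Finset.sum_le_sum fun u _ ↦ Finset.sum_le_sum fun v _ ↦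
          card_isNonBacktracking_not_isPath_le k u v
    _ = ∑ ij ∈ Finset.range k ×ˢ Finset.range k, ∑ x, ∑ u, ∑ v, _ := by
        rw [Finset.sum_congr rfl fun u _ ↦ Finset.sum_comm, Finset.sum_comm]
        refine Finset.sum_congr rfl fun ij _ ↦ ?_
        rw [Finset.sum_congr rfl fun u _ ↦ Finset.sum_comm, Finset.sum_comm]
    _ ≤ ∑ _ij ∈ Finset.range k ×ˢ Finset.range k, ∑ _x : V, D ^ (k - 2) :=
        Finset.sum_le_sum fun ij _ ↦ Finset.sum_le_sum fun x _ ↦ key ij.1 ij.2 x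
    _ = k ^ 2 * (Fintype.card V * D ^ (k - 2)) := by simp [sq]

lemma PathsUnique.sum_card_isNonBacktracking_le {k : ℕ} (hG : PathsUnique G k) {D : ℕ}
    (hD : ∀ v, G.degree v ≤ D) :
    ∑ u, ∑ v, #{p ∈ G.finsetWalkLength k u v | IsNonBacktracking p} ≤
      Fintype.card V ^ 2 + k ^ 2 * (Fintype.card V * D ^ (k - 2)) := by
  have hsplit (u v : V) : #{p ∈ G.finsetWalkLength k u v | IsNonBacktracking p} ≤
      1 + #{p ∈ G.finsetWalkLength k u v | IsNonBacktracking p ∧ ¬ p.IsPath} := by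
    rw [← Finset.card_filter_add_card_filter_not Walk.IsPath, Finset.filter_filter,
      Finset.filter_filter]
    gcongr
    refine (Finset.card_le_card ?_).trans (hG.card_isPath_le_one le_rfl u v)
    exact Finset.monotone_filter_right _ fun p _ hp ↦ hp.2
  calc ∑ u, ∑ v, #{p ∈ G.finsetWalkLength k u v | IsNonBacktracking p}
    _ ≤ ∑ u, ∑ v, (1 + #{p ∈ G.finsetWalkLength k u v | IsNonBacktracking p ∧ ¬ p.IsPath}) :=
        Finset.sum_le_sum fun u _ ↦ Finset.sum_le_sum fun v _ ↦ hsplit u v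
    _ = Fintype.card V ^ 2 +
        ∑ u, ∑ v, #{p ∈ G.finsetWalkLength k u v | IsNonBacktracking p ∧ ¬ p.IsPath} := by
        simp [Finset.sum_add_distrib, sq]
    _ ≤ _ := Nat.add_le_add_left (hG.sum_card_isNonBacktracking_not_isPath_le hD) _

lemma pow_le_sum_card_isPath {δ : ℕ} (hδ : ∀ v, δ ≤ G.degree v) (n : ℕ) {u : V} {A : Finset V}
    (hu : u ∉ A) :
    (δ - #A - n) ^ n ≤
      ∑ v, #{p ∈ G.finsetWalkLength n u v | p.IsPath ∧ ∀ w ∈ p.support, w ∉ A} := by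
  induction n generalizing u A with
  | zero =>
    refine le_trans ?_ (Finset.single_le_sum (fun _ _ ↦ Nat.zero_le _) (Finset.mem_univ u))
    exact Finset.card_pos.2 ⟨.nil, by simpa [mem_finsetWalkLength_iff] using hu⟩
  | succ n ih =>
    rw [sum_card_filter_finsetWalkLength_succ n
      (Q := fun x v p ↦ p.IsPath ∧ ∀ w ∈ p.support, w ∉ insert u A)
      (fun x v h p ↦ by
        simp only [Walk.cons_isPath_iff, Walk.support_cons, List.mem_cons, Finset.mem_insert]
        grind)]
    have hcard : #(insert u A) = #A + 1 := Finset.card_insert_of_notMem hu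
    calc (δ - #A - (n + 1)) ^ (n + 1)
      _ ≤ #(G.neighborFinset u \ A) * (δ - #(insert u A) - n) ^ n := by
          rw [pow_succ', hcard]
          gcongr ?_ * ?_ ^ n
          · refine le_trans ?_ (Finset.le_card_sdiff _ _)
            have := G.card_neighborFinset_eq_degree u ▸ hδ u
            omega
          · omega
      _ = ∑ _x ∈ G.neighborFinset u \ A, (δ - #(insert u A) - n) ^ n := by
          rw [Finset.sum_const, smul_eq_mul]
      _ ≤ ∑ x ∈ G.neighborFinset u \ A, ∑ v, #{p ∈ G.finsetWalkLength n x v |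
            p.IsPath ∧ ∀ w ∈ p.support, w ∉ insert u A} :=
          Finset.sum_le_sum fun x hx ↦ ih (by
            rw [Finset.mem_sdiff, mem_neighborFinset] at hx
            simp [hx.1.ne', hx.2])
      _ ≤ _ := Finset.sum_le_sum_of_subset Finset.sdiff_subset

omit [DecidableEq V] in
lemma PathsUnique.degree_mul_pow_le {k δ : ℕ} (hG : PathsUnique G (k + 1))
    (hδ : ∀ v, δ ≤ G.degree v) (u : V) :
    G.degree u * (δ - 1 - k) ^ k ≤ Fintype.card V := by
  classical
  calc G.degree u * (δ - 1 - k) ^ k = ∑ _x ∈ G.neighborFinset u, (δ - #{u} - k) ^ k := by simp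
    _ ≤ ∑ x ∈ G.neighborFinset u, ∑ v, #{p ∈ G.finsetWalkLength k x v |
          p.IsPath ∧ ∀ w ∈ p.support, w ∉ ({u} : Finset V)} :=
        Finset.sum_le_sum fun x hx ↦ pow_le_sum_card_isPath hδ k (by
          simpa using ((G.mem_neighborFinset u x).1 hx).ne')
    _ = ∑ v, #{p ∈ G.finsetWalkLength (k + 1) u v | p.IsPath} :=
        (sum_card_filter_finsetWalkLength_succ k fun x v h p ↦ by
          rw [Walk.cons_isPath_iff]
          simp only [Finset.mem_singleton, ← ne_eq, List.forall_mem_ne']).symm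
    _ ≤ ∑ v : V, 1 := Finset.sum_le_sum fun v _ ↦ hG.card_isPath_le_one le_rfl u v
    _ = Fintype.card V := by simp

end WalkCounting

section LogSum

open scoped Finset

variable {ι : Type*} {s : Finset ι} {a : ι → ℝ}

lemma sum_log_add_card_mul_log_card_le (hs : s.Nonempty) (ha : ∀ i ∈ s, 0 < a i) :
    ∑ i ∈ s, Real.log (a i) + #s * Real.log #s ≤ #s * Real.log (∑ i ∈ s, a i) := by
  have hcard : (0 : ℝ) < #s := mod_cast hs.card_pos
  have hjensen := strictConcaveOn_log_Ioi.concaveOn.le_map_sum (t := s) (w := fun _ ↦ (#s : ℝ)⁻¹)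
    (p := a) (fun _ _ ↦ by positivity) (by simp [hcard.ne']) ha
  simp only [smul_eq_mul, ← Finset.mul_sum] at hjensen
  rw [Real.log_mul (by positivity) (Finset.sum_pos ha hs).ne', Real.log_inv,
    inv_mul_le_iff₀ hcard] at hjensen
  linarith

lemma sum_log_add_card_mul_log_le_sum_log_sum_erase [DecidableEq ι] (hs : s.Nontrivial)
    (ha : ∀ i ∈ s, 0 < a i) :
    ∑ i ∈ s, Real.log (a i) + #s * Real.log (#s - 1) ≤
      ∑ i ∈ s, Real.log (∑ j ∈ s.erase i, a j) := by
  have hcard : (0 : ℝ) < #s - 1 :=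
    sub_pos.2 (mod_cast Finset.one_lt_card_iff_nontrivial.2 hs)
  have herase (i : ι) (hi : i ∈ s) :
      ∑ j ∈ s, Real.log (a j) - Real.log (a i) + (#s - 1) * Real.log (#s - 1) ≤
        (#s - 1) * Real.log (∑ j ∈ s.erase i, a j) := by
    have := sum_log_add_card_mul_log_card_le (hs.erase_nonempty (a := i))
      fun j hj ↦ ha j (Finset.mem_of_mem_erase hj)
    rwa [Finset.cast_card_erase_of_mem hi, Finset.sum_erase_eq_sub hi] at this
  have hsum := Finset.sum_le_sum herase
  rw [Finset.sum_add_distrib, Finset.sum_sub_distrib, ← Finset.mul_sum, Finset.sum_const,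
    Finset.sum_const, nsmul_eq_mul, nsmul_eq_mul, ← Finset.mul_sum] at hsum
  refine le_of_mul_le_mul_left ?_ hcard
  linarith

lemma convexOn_add_one_mul_log : ConvexOn ℝ (Ici 1) fun y : ℝ ↦ (y + 1) * Real.log y := by
  have hf (y : ℝ) (hy : 0 < y) :
      HasDerivAt (fun y ↦ (y + 1) * Real.log y) (Real.log y + (1 + y⁻¹)) y := by
    refine (((hasDerivAt_id' y).add_const 1).mul (Real.hasDerivAt_log hy.ne')).congr_deriv ?_
    field_simp
  have hf' (y : ℝ) (hy : 0 < y) :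
      HasDerivAt (fun y ↦ Real.log y + (1 + y⁻¹)) ((y - 1) / y ^ 2) y := by
    refine ((Real.hasDerivAt_log hy.ne').add ((hasDerivAt_inv hy.ne').const_add 1)).congr_deriv ?_
    field_simp
    ring
  have hmem {y : ℝ} (hy : y ∈ interior (Ici (1 : ℝ))) : 1 < y := by simpa using hy
  refine convexOn_of_hasDerivWithinAt2_nonneg (convex_Ici 1)
    (fun y hy ↦ (hf y (one_pos.trans_le hy)).continuousAt.continuousWithinAt)
    (fun y hy ↦ (hf y (one_pos.trans (hmem hy))).hasDerivWithinAt)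
    (fun y hy ↦ (hf' y (one_pos.trans (hmem hy))).hasDerivWithinAt) fun y hy ↦ ?_
  have := sub_pos.2 (hmem hy)
  positivity

lemma sum_mul_log_sum_div_card_sub_one_le (ha : ∀ i ∈ s, 2 ≤ a i) :
    (∑ i ∈ s, a i) * Real.log ((∑ i ∈ s, a i) / #s - 1) ≤
      ∑ i ∈ s, a i * Real.log (a i - 1) := by
  obtain rfl | hs := s.eq_empty_or_nonempty
  · simp
  have hcard : (0 : ℝ) < #s := mod_cast hs.card_pos
  have hjensen := convexOn_add_one_mul_log.map_sum_le (t := s) (w := fun _ ↦ (#s : ℝ)⁻¹)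
    (p := fun i ↦ a i - 1) (fun _ _ ↦ by positivity) (by simp [hcard.ne'])
    fun i hi ↦ mem_Ici.2 (by linarith [ha i hi])
  have haverage : (#s : ℝ)⁻¹ * (∑ i ∈ s, (a i - 1)) = (∑ i ∈ s, a i) / #s - 1 := by
    rw [Finset.sum_sub_distrib, Finset.sum_const, nsmul_one]
    field_simp
  simp only [smul_eq_mul, ← Finset.mul_sum, haverage, sub_add_cancel] at hjensen
  rwa [div_mul_eq_mul_div, inv_mul_eq_div, div_le_div_iff_of_pos_right hcard] at hjensen

end LogSum

section NonBacktrackingCount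

open SimpleGraph
open scoped Finset

variable {V : Type*} [Fintype V] [DecidableEq V] {G : SimpleGraph V} [DecidableRel G.Adj]

variable (G) in
/-- The number of ways to continue the step from `u` to `v` by a walk of length `n` from `v`
without backtracking; `u` and `v` need not be adjacent. Its recurrence drives the
Alon–Hoory–Linial bound. -/
def nonBacktrackingCount (n : ℕ) (u v : V) : ℕ :=
  ∑ w, #{p ∈ G.finsetWalkLength n v w | (s(u, v) :: p.edges).IsChain (· ≠ ·)}

lemma nonBacktrackingCount_zero (u v : V) : nonBacktrackingCount G 0 u v = 1 := by
  simp [nonBacktrackingCount, finsetWalkLength, apply_dite, Finset.filter_singleton]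

lemma nonBacktrackingCount_succ (n : ℕ) (u v : V) :
    nonBacktrackingCount G (n + 1) u v =
      ∑ w ∈ (G.neighborFinset v).erase u, nonBacktrackingCount G n v w := by
  rw [nonBacktrackingCount, sum_card_filter_finsetWalkLength_succ n
    (Q := fun w _ p ↦ w ≠ u ∧ (s(v, w) :: p.edges).IsChain (· ≠ ·))]
  · rw [← Finset.filter_ne', Finset.sum_filter]
    refine Finset.sum_congr rfl fun w _ ↦ ?_
    split_ifs with hwu <;> simp [hwu, nonBacktrackingCount]
  · intro w x h p
    rw [Walk.edges_cons, List.isChain_cons_cons, ne_eq, Sym2.eq_swap, Sym2.congr_right, eq_comm]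

lemma sum_nonBacktrackingCount (n : ℕ) (u : V) :
    ∑ v ∈ G.neighborFinset u, nonBacktrackingCount G n u v =
      ∑ v, #{p ∈ G.finsetWalkLength (n + 1) u v | IsNonBacktracking p} :=
  (sum_card_filter_finsetWalkLength_succ n fun v w h p ↦ by
    rw [IsNonBacktracking, Walk.edges_cons]).symm

lemma nonBacktrackingCount_pos (hδ : ∀ v, 2 ≤ G.degree v) (n : ℕ) (u v : V) :
    0 < nonBacktrackingCount G n u v := by
  induction n generalizing u v with
  | zero => simp [nonBacktrackingCount_zero]
  | succ n ih =>
    rw [nonBacktrackingCount_succ]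
    refine Finset.sum_pos (fun w _ ↦ ih v w) (Finset.Nontrivial.erase_nonempty ?_)
    rw [← Finset.one_lt_card_iff_nontrivial, card_neighborFinset_eq_degree]
    exact hδ v

lemma mul_sum_degree_mul_log_le (hδ : ∀ v, 2 ≤ G.degree v) (n : ℕ) :
    n * ∑ v, (G.degree v : ℝ) * Real.log (G.degree v - 1) ≤
      ∑ u, ∑ v ∈ G.neighborFinset u, Real.log (nonBacktrackingCount G n u v) := by
  induction n with
  | zero => simp [nonBacktrackingCount_zero]
  | succ n ih =>
    have hstep (v : V) :
        ∑ w ∈ G.neighborFinset v, Real.log (nonBacktrackingCount G n v w) +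
          G.degree v * Real.log (G.degree v - 1) ≤
        ∑ u ∈ G.neighborFinset v, Real.log (nonBacktrackingCount G (n + 1) u v) := by
      have hnontrivial : (G.neighborFinset v).Nontrivial := by
        rw [← Finset.one_lt_card_iff_nontrivial, card_neighborFinset_eq_degree]
        exact hδ v
      simpa [nonBacktrackingCount_succ] using
        sum_log_add_card_mul_log_le_sum_log_sum_erase hnontrivial
          (a := fun w ↦ (nonBacktrackingCount G n v w : ℝ))
          fun w _ ↦ mod_cast nonBacktrackingCount_pos hδ n v w
    calc ((n + 1 : ℕ) : ℝ) * ∑ v, (G.degree v : ℝ) * Real.log (G.degree v - 1)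
      _ = n * ∑ v, (G.degree v : ℝ) * Real.log (G.degree v - 1) +
          ∑ v, (G.degree v : ℝ) * Real.log (G.degree v - 1) := by push_cast; ring
      _ ≤ ∑ v, (∑ w ∈ G.neighborFinset v, Real.log (nonBacktrackingCount G n v w) +
          G.degree v * Real.log (G.degree v - 1)) := by
          rw [Finset.sum_add_distrib]; gcongr
      _ ≤ ∑ v, ∑ u ∈ G.neighborFinset v, Real.log (nonBacktrackingCount G (n + 1) u v) :=
          Finset.sum_le_sum fun v _ ↦ hstep v
      _ = _ := Finset.sum_comm' (by simp [G.adj_comm])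

omit [DecidableEq V] in
lemma le_sum_degree_div_card [Nonempty V] {δ : ℝ} (hδ : ∀ v, δ ≤ G.degree v) :
    δ ≤ (∑ v, (G.degree v : ℝ)) / Fintype.card V := by
  rw [le_div_iff₀ (mod_cast Fintype.card_pos), mul_comm, ← nsmul_eq_mul]
  exact Finset.card_nsmul_le_sum _ _ _ fun v _ ↦ hδ v

/-- The theorem of Alon, Hoory and Linial. -/
lemma sum_degree_mul_pow_le (hδ : ∀ v, 2 ≤ G.degree v) (n : ℕ) :
    (∑ v, (G.degree v : ℝ)) * ((∑ v, (G.degree v : ℝ)) / Fintype.card V - 1) ^ n ≤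
      ∑ u, ∑ v, (#{p ∈ G.finsetWalkLength (n + 1) u v | IsNonBacktracking p} : ℝ) := by
  obtain _ | _ := isEmpty_or_nonempty V
  · simp
  have hcount (u v : V) : (0 : ℝ) < nonBacktrackingCount G n u v :=
    mod_cast nonBacktrackingCount_pos hδ n u v
  let s := (Finset.univ : Finset V).sigma fun u ↦ G.neighborFinset u
  set D := ∑ v, (G.degree v : ℝ) with hD
  have hcard : (#s : ℝ) = D := by simp [s, hD]
  have haverage : 2 ≤ D / Fintype.card V :=
    le_sum_degree_div_card fun v ↦ mod_cast hδ v
  have hbase : 0 < D / Fintype.card V - 1 := by linarith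
  have hD0 : 0 < D := by
    by_contra! hD0
    linarith [div_nonpos_of_nonpos_of_nonneg hD0 (Nat.cast_nonneg (Fintype.card V))]
  have hs : s.Nonempty := Finset.card_pos.1 (by exact_mod_cast hcard ▸ hD0)
  have hlog : D * Real.log (D * (D / Fintype.card V - 1) ^ n) ≤
      D * Real.log (∑ e ∈ s, (nonBacktrackingCount G n e.1 e.2 : ℝ)) := by
    calc D * Real.log (D * (D / Fintype.card V - 1) ^ n)
      _ = n * (D * Real.log (D / Fintype.card V - 1)) + D * Real.log D := by
          rw [Real.log_mul hD0.ne' (by positivity), Real.log_pow]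
          ring
      _ ≤ ∑ e ∈ s, Real.log (nonBacktrackingCount G n e.1 e.2) + D * Real.log D := by
          rw [Finset.sum_sigma]
          gcongr
          refine le_trans ?_ (mul_sum_degree_mul_log_le hδ n)
          gcongr
          exact sum_mul_log_sum_div_card_sub_one_le fun v _ ↦ mod_cast hδ v
      _ ≤ D * Real.log (∑ e ∈ s, (nonBacktrackingCount G n e.1 e.2 : ℝ)) := by
          rw [← hcard]
          exact sum_log_add_card_mul_log_card_le hs fun e _ ↦ hcount e.1 e.2
  calc D * (D / Fintype.card V - 1) ^ n
    _ ≤ ∑ e ∈ s, (nonBacktrackingCount G n e.1 e.2 : ℝ) :=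
        (Real.log_le_log_iff (by positivity) (Finset.sum_pos (fun e _ ↦ hcount e.1 e.2) hs)).1
          (le_of_mul_le_mul_left hlog hD0)
    _ = ∑ u, ∑ v, (#{p ∈ G.finsetWalkLength (n + 1) u v | IsNonBacktracking p} : ℝ) := by
        rw [Finset.sum_sigma]
        exact_mod_cast Finset.sum_congr rfl fun u _ ↦ sum_nonBacktrackingCount n u

end NonBacktrackingCount

section MinDegree

open SimpleGraph
open scoped Finset

universe u

/-- Deleting a vertex of degree less than `c` preserves `c * n < e` for the numbers `n` of vertices
and `e` of edges. -/
lemma exists_isContained_forall_le_degree {c : ℝ} {V : Type u} [Fintype V] (G : SimpleGraph V)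
    [DecidableRel G.Adj] (hG : c * Fintype.card V < #G.edgeFinset) :
    ∃ (W : Type u) (_ : Fintype W) (H : SimpleGraph W) (_ : DecidableRel H.Adj),
      H ⊑ G ∧ c * Fintype.card W < #H.edgeFinset ∧ ∀ v, c ≤ H.degree v := by
  classical
  induction hn : Fintype.card V generalizing V with
  | zero =>
    have : IsEmpty V := Fintype.card_eq_zero_iff.1 hn
    exact ⟨V, _, G, _, .rfl, hG, isEmptyElim⟩
  | succ n ih =>
    by_cases! hdeg : ∀ v, c ≤ G.degree v
    · exact ⟨V, _, G, _, .rfl, hG, hdeg⟩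
    obtain ⟨v, hv⟩ := hdeg
    have hcard : Fintype.card ({v}ᶜ : Set V) = n := by
      rw [Fintype.card_compl_set, hn, Set.card_singleton, Nat.add_sub_cancel]
    have hedge : (#G.edgeFinset : ℝ) ≤ #(G.induce {v}ᶜ).edgeFinset + G.degree v := by
      rw [G.card_edgeFinset_induce_compl_singleton, G.card_edgeFinset_deleteIncidenceSet]
      exact_mod_cast le_tsub_add
    rw [hn, Nat.cast_succ] at hG
    obtain ⟨W, _, H, _, hHG, hH⟩ := ih (G.induce {v}ᶜ) (by rw [hcard]; linarith) hcard
    exact ⟨W, _, H, _, hHG.trans ⟨(Embedding.induce _).toCopy⟩, hH⟩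

end MinDegree

section Estimates

open SimpleGraph Filter
open scoped Finset Topology

variable {V : Type*} [Fintype V] {G : SimpleGraph V} [DecidableRel G.Adj] {k : ℕ} {d : ℝ}

lemma PathsUnique.degree_le (hG : PathsUnique G (k + 1)) (hd : 4 * (k + 1) ≤ d)
    (hδ : ∀ v, d / 2 ≤ G.degree v) (hcard : Fintype.card V ≤ d ^ (k + 1)) (v : V) :
    G.degree v ≤ 4 ^ k * d := by
  have hd0 : 0 < d := by linarith [k.cast_nonneg (α := ℝ)]
  have hceil : d / 4 ≤ (⌈d / 2⌉₊ - 1 - k : ℕ) := by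
    have := Nat.le_ceil (d / 2)
    have : (⌈d / 2⌉₊ : ℝ) ≤ (⌈d / 2⌉₊ - 1 - k : ℕ) + (k + 1) := mod_cast by omega
    linarith
  refine le_of_mul_le_mul_right ?_ (by positivity : 0 < (d / 4) ^ k)
  calc G.degree v * (d / 4) ^ k
    _ ≤ G.degree v * ((⌈d / 2⌉₊ - 1 - k : ℕ) : ℝ) ^ k := by gcongr
    _ ≤ Fintype.card V := mod_cast hG.degree_mul_pow_le (fun w ↦ Nat.ceil_le.2 (hδ w)) v
    _ ≤ d ^ (k + 1) := hcard
    _ = 4 ^ k * d * (d / 4) ^ k := by rw [div_pow, pow_succ]; field_simp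

lemma PathsUnique.mul_sub_one_pow_le [Nonempty V] (hG : PathsUnique G (k + 1))
    (hd : 4 * (k + 1) ≤ d) (hδ : ∀ v, d / 2 ≤ G.degree v)
    (hcard : Fintype.card V ≤ d ^ (k + 1)) (hE : d / 2 * Fintype.card V ≤ #G.edgeFinset) :
    d * (d - 1) ^ k ≤ Fintype.card V + (k + 1) ^ 2 * (4 ^ k * d) ^ (k - 1) := by
  classical
  have hn : (0 : ℝ) < Fintype.card V := mod_cast Fintype.card_pos
  have hsum : Fintype.card V * d ≤ ∑ v, (G.degree v : ℝ) := by
    have : ∑ v, (G.degree v : ℝ) = 2 * #G.edgeFinset := mod_cast G.sum_degrees_eq_twice_card_edges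
    linarith
  have haverage : d ≤ (∑ v, (G.degree v : ℝ)) / Fintype.card V := (le_div_iff₀' hn).2 hsum
  have hd1 : 0 ≤ d - 1 := by linarith [k.cast_nonneg (α := ℝ)]
  have htwo (v : V) : 2 ≤ G.degree v := by
    have : (2 : ℝ) ≤ G.degree v := by linarith [hδ v, k.cast_nonneg (α := ℝ)]
    exact_mod_cast this
  refine le_of_mul_le_mul_left ?_ hn
  calc Fintype.card V * (d * (d - 1) ^ k) = Fintype.card V * d * (d - 1) ^ k := by ring
    _ ≤ (∑ v, (G.degree v : ℝ)) * ((∑ v, (G.degree v : ℝ)) / Fintype.card V - 1) ^ k := by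
        gcongr
    _ ≤ ∑ u, ∑ v, (#{p ∈ G.finsetWalkLength (k + 1) u v | IsNonBacktracking p} : ℝ) :=
        sum_degree_mul_pow_le htwo k
    _ ≤ (Fintype.card V : ℝ) ^ 2 + (k + 1) ^ 2 * (Fintype.card V * (G.maxDegree : ℝ) ^ (k - 1)) :=
        mod_cast hG.sum_card_isNonBacktracking_le G.degree_le_maxDegree
    _ ≤ (Fintype.card V : ℝ) ^ 2 + (k + 1) ^ 2 * (Fintype.card V * (4 ^ k * d) ^ (k - 1)) := by
        obtain ⟨v, hv⟩ := G.exists_maximal_degree_vertex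
        gcongr
        rw [hv]
        exact hG.degree_le hd hδ hcard v
    _ = Fintype.card V * (Fintype.card V + (k + 1) ^ 2 * (4 ^ k * d) ^ (k - 1)) := by ring

omit [DecidableRel G.Adj] in
lemma PathsUnique.ncard_edgeSet_le (hG : PathsUnique G (k + 1)) (hd : 4 * (k + 1) ≤ d)
    (hcard : Fintype.card V ≤ d ^ (k + 1))
    (hlt : Fintype.card V + (k + 1) ^ 2 * (4 ^ k * d) ^ (k - 1) < d * (d - 1) ^ k) :
    G.edgeSet.ncard ≤ d / 2 * Fintype.card V := by
  classical
  by_contra! hE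
  rw [← coe_edgeFinset, Set.ncard_coe_finset] at hE
  obtain ⟨W, _, H, _, hHG, hHE, hHδ⟩ := exists_isContained_forall_le_degree G hE
  have hle : Fintype.card W ≤ Fintype.card V :=
    hHG.elim fun f ↦ Fintype.card_le_of_injective f f.injective
  have : Nonempty W := by
    by_contra! hW
    simp [Subsingleton.elim H ⊥] at hHE
  have hbound := (hG.of_isContained hHG).mul_sub_one_pow_le hd hHδ
    ((Nat.cast_le.2 hle).trans hcard) hHE.le
  linarith [(Nat.cast_le (α := ℝ)).2 hle]

/-- Divided by `t ^ (k + 2)` and written in `x = t⁻¹`, the two sides agree at `x = 0`, so their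
derivatives there decide. -/
lemma eventually_pow_add_lt {b : ℝ} (hb : (k + 1) / (k + 2) < b) (C : ℝ) :
    ∀ᶠ t in atTop, t ^ (k + 2) + C * (t + b) ^ k < (t + b) * (t + b - 1) ^ (k + 1) := by
  let f (x : ℝ) := (1 + b * x) * (1 + (b - 1) * x) ^ (k + 1) - C * x ^ 2 * (1 + b * x) ^ k
  have hlin (a : ℝ) : HasDerivAt (fun x ↦ 1 + a * x) a 0 := by
    simpa using ((hasDerivAt_id (0 : ℝ)).const_mul a).const_add 1
  have hf : HasDerivAt f (b + (k + 1) * (b - 1)) 0 := by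
    refine (((hlin b).mul ((hlin (b - 1)).pow (k + 1))).sub
      (((hasDerivAt_pow 2 0).const_mul C).mul ((hlin b).pow k))).congr_deriv ?_
    simp
  have hpos : 0 < b + (k + 1) * (b - 1) := by
    rw [div_lt_iff₀ (by positivity)] at hb
    linarith
  have hslope : ∀ᶠ x in 𝓝[>] 0, 0 < x⁻¹ * (f (0 + x) - f 0) :=
    hf.tendsto_slope_zero_right.eventually_const_lt hpos
  filter_upwards [tendsto_inv_atTop_nhdsGT_zero.eventually hslope, eventually_gt_atTop 0]
    with t hft ht
  have hscale : f t⁻¹ * t ^ (k + 2) =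
      (t + b) * (t + b - 1) ^ (k + 1) - C * (t + b) ^ k := by
    have hlin_inv (a : ℝ) : 1 + a * t⁻¹ = (t + a) / t := by field_simp
    simp only [f, hlin_inv, div_pow, ← add_sub_assoc]
    field_simp
    ring
  have hft1 : 1 < f t⁻¹ := by
    simpa [f, ht] using hft
  have := mul_lt_mul_of_pos_right hft1 (pow_pos ht (k + 2))
  rw [hscale] at this
  linarith

end Estimates

universe u

theorem kNeighborly_vertex_bound_general (k : ℕ) (hk : 2 ≤ k) :
    ∀ ε : ℝ, 0 < ε → ∃ N : ℕ, ∀ (V : Type u) [Fintype V], N ≤ Fintype.card V →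
      ∀ G : SimpleGraph V, PathsUnique G k →
        (G.edgeSet.ncard : ℝ) ≤
          (1 / 2) * (Fintype.card V : ℝ) ^ ((1 : ℝ) + 1 / (k : ℝ))
            + (((k : ℝ) - 1) / (2 * (k : ℝ)) + ε) * (Fintype.card V : ℝ) := by
  intro ε hε
  obtain ⟨k, rfl⟩ := Nat.exists_eq_add_of_le' hk
  set b : ℝ := (k + 1) / (k + 2) + 2 * ε with hb
  have hroot : Filter.Tendsto (fun n : ℕ ↦ (n : ℝ) ^ (1 / ((k + 2 : ℕ) : ℝ))) .atTop .atTop :=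
    (tendsto_rpow_atTop (by positivity)).comp tendsto_natCast_atTop_atTop
  have hlarge := hroot.eventually <|
    (eventually_pow_add_lt (k := k) (b := b) (by linarith) ((k + 2) ^ 2 * (4 ^ (k + 1)) ^ k)).and
      (Filter.eventually_ge_atTop (4 * (k + 2) : ℝ))
  obtain ⟨N, hN⟩ := Filter.eventually_atTop.1 (hlarge.and (Filter.eventually_gt_atTop 0))
  refine ⟨N, fun V _ hV G hG ↦ ?_⟩
  obtain ⟨⟨hlt, ht⟩, hn⟩ := hN _ hV
  set t := (Fintype.card V : ℝ) ^ (1 / ((k + 2 : ℕ) : ℝ)) with ht_def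
  have hb0 : 0 ≤ b := by positivity
  have hpow : t ^ (k + 2) = Fintype.card V := by
    rw [ht_def, one_div, Real.rpow_inv_natCast_pow (by positivity) (by omega)]
  have hE := hG.ncard_edgeSet_le (d := t + b) (k := k + 1)
    (by push_cast; linarith) (by rw [← hpow]; gcongr; linarith)
    (by rw [← hpow, mul_pow]; push_cast; convert hlt using 2; ring)
  rw [Real.rpow_add (mod_cast hn), Real.rpow_one, ← ht_def]
  refine hE.trans_eq ?_
  rw [hb]
  push_cast
  field_simp
  ring

/-- Fix `k ≥ 2`.  For every `ε > 0` there is an `N` such that for every `n ≥ N`, every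
graph `G` on `n` vertices with no isolated vertices whose edge polytope is
`k`-neighborly has at most `(1/2) n^(1 + 1/k) + ((k-1)/(2k) + ε) n` edges; equivalently,
its edge polytope has at most that many vertices. -/
theorem kNeighborly_vertex_bound (k : ℕ) (hk : 2 ≤ k) :
    ∀ ε : ℝ, 0 < ε → ∃ N : ℕ, ∀ n : ℕ, N ≤ n →
      ∀ G : SimpleGraph (Fin n), (∀ v : Fin n, ∃ w : Fin n, G.Adj v w) →
        KNeighborly (edgePolytope G) k →
          (G.edgeSet.ncard : ℝ) ≤
            (1 / 2) * (n : ℝ) ^ ((1 : ℝ) + 1 / (k : ℝ))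
              + (((k : ℝ) - 1) / (2 * (k : ℝ)) + ε) * (n : ℝ) := by
  intro ε hε
  obtain ⟨N, hN⟩ := kNeighborly_vertex_bound_general k hk ε hε
  exact ⟨N, fun n hn G _ hG ↦ by simpa using hN (Fin n) (by simpa using hn) G hG.pathsUnique⟩
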